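/- arXiv:2405.16651 — 2 statements merged into one kernel-verified Lean document; each statement's English description precedes it below -/
import Mathlib

section
/- Let M ≥ 1, N ≥ 1, let A be a real N×N matrix with ν = ‖A‖ > 0, let h > 0 satisfy hν ≤ 2, and let T = (M−1)h. Let Ã_f = I_{MN} − S ⊗ (I_N + h·A) be the forward-Euler block matrix, where S is the M×M subdiagonal shift matrix. Then the condition number of Ã_f satisfies κ(Ã_f) = ‖Ã_f‖·‖Ã_f⁻¹‖ ≤ 12·e^{νT}/(hν). -/
open Matrix
open scoped Kronecker

/-- The ℓ²→ℓ² operator (spectral) norm of a matrix. -/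
noncomputable def specNorm {𝕜 : Type*} [RCLike 𝕜] {n : Type*} [Fintype n] [DecidableEq n]
    (A : Matrix n n 𝕜) : ℝ :=
  ‖LinearMap.toContinuousLinearMap (Matrix.toEuclideanLin A)‖

/-- The M×M subdiagonal shift matrix: entry (i,j) is 1 if i = j+1 and 0 otherwise. -/
def shiftMatrix (M : ℕ) : Matrix (Fin M) (Fin M) ℝ :=
  Matrix.of fun i j => if (i : ℕ) = (j : ℕ) + 1 then 1 else 0

open scoped Matrix.Norms.L2Operator in
lemma specNorm_eq {n : Type*} [Fintype n] [DecidableEq n] (A : Matrix n n ℝ) :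
    specNorm A = ‖A‖ := by
  rw [Matrix.l2_opNorm_def]; rfl

open scoped Matrix.Norms.L2Operator in
lemma sum_sq_mulVec_le {n : Type*} [Fintype n] [DecidableEq n] (A : Matrix n n ℝ) (v : n → ℝ) :
    ∑ i, (∑ j, A i j * v j) ^ 2 ≤ ‖A‖ ^ 2 * ∑ j, v j ^ 2 := by
  have h := Matrix.l2_opNorm_mulVec A (WithLp.toLp 2 v)
  have h2 := pow_le_pow_left₀ (norm_nonneg _) h 2
  rw [mul_pow, EuclideanSpace.norm_sq_eq, EuclideanSpace.norm_sq_eq] at h2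
  simpa [Matrix.mulVec, dotProduct] using h2

open scoped Matrix.Norms.L2Operator in
lemma norm_le_of_sum_sq {n : Type*} [Fintype n] [DecidableEq n] (A : Matrix n n ℝ) (c : ℝ)
    (hc : 0 ≤ c)
    (H : ∀ v : n → ℝ, ∑ i, (∑ j, A i j * v j) ^ 2 ≤ c ^ 2 * ∑ j, v j ^ 2) : ‖A‖ ≤ c := by
  rw [← specNorm_eq]
  refine ContinuousLinearMap.opNorm_le_bound _ hc fun v => ?_
  refine le_of_sq_le_sq ?_ (by positivity)
  rw [mul_pow, EuclideanSpace.norm_sq_eq, EuclideanSpace.norm_sq_eq]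
  simpa [Matrix.mulVec, dotProduct] using H v.ofLp

open scoped Matrix.Norms.L2Operator in
lemma norm_kronecker_le {m n : Type*} [Fintype n] [DecidableEq n] [Fintype m] [DecidableEq m]
    (S : Matrix m m ℝ) (B : Matrix n n ℝ) : ‖S ⊗ₖ B‖ ≤ ‖S‖ * ‖B‖ := by
  refine norm_le_of_sum_sq _ _ (by positivity) fun v => ?_
  have e : ∀ i : m × n, ∑ j, (S ⊗ₖ B) i j * v j
      = ∑ k, S i.1 k * ∑ l, B i.2 l * v (k, l) := by
    intro i
    rw [Fintype.sum_prod_type]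
    simp only [Matrix.kroneckerMap_apply, Finset.mul_sum, mul_assoc]
  simp only [e]
  rw [Fintype.sum_prod_type_right, Fintype.sum_prod_type]
  calc ∑ y, ∑ x, (∑ k, S x k * ∑ l, B y l * v (k, l)) ^ 2
      ≤ ∑ y, ‖S‖ ^ 2 * ∑ k, (∑ l, B y l * v (k, l)) ^ 2 :=
        Finset.sum_le_sum fun y _ => sum_sq_mulVec_le S fun k => ∑ l, B y l * v (k, l)
    _ = ‖S‖ ^ 2 * ∑ k, ∑ y, (∑ l, B y l * v (k, l)) ^ 2 := by
        rw [← Finset.mul_sum, Finset.sum_comm]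
    _ ≤ ‖S‖ ^ 2 * ∑ k, ‖B‖ ^ 2 * ∑ l, v (k, l) ^ 2 := by
        gcongr with k
        exact sum_sq_mulVec_le B fun l => v (k, l)
    _ = _ := by rw [← Finset.mul_sum]; ring

open scoped Matrix.Norms.L2Operator in
lemma norm_one_le' {n : Type*} [Fintype n] [DecidableEq n] : ‖(1 : Matrix n n ℝ)‖ ≤ 1 := by
  refine norm_le_of_sum_sq _ _ zero_le_one fun v => ?_
  simp [Matrix.one_apply]

open scoped Matrix.Norms.L2Operator in
lemma norm_shift_le (M : ℕ) : ‖shiftMatrix M‖ ≤ 1 := by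
  refine norm_le_of_sum_sq _ _ zero_le_one fun v => ?_
  cases M with
  | zero => simp
  | succ n =>
    rw [Fin.sum_univ_succ, Fin.sum_univ_castSucc (fun j => v j ^ 2)]
    have h0 : ∑ j, shiftMatrix (n+1) 0 j * v j = 0 :=
      Finset.sum_eq_zero fun j _ => by simp [shiftMatrix]
    have h1 : ∀ i : Fin n, ∑ j, shiftMatrix (n+1) i.succ j * v j = v i.castSucc := by
      intro i
      rw [Finset.sum_eq_single i.castSucc]
      · simp [shiftMatrix]
      · intro b _ hb
        have : ¬ ((i : ℕ) = b) := fun h => hb (Fin.ext h.symm)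
        simp [shiftMatrix, this]
      · simp
    simp only [h0, h1]
    nlinarith [sq_nonneg (v (Fin.last n))]

lemma shift_pow_apply (M k : ℕ) (i j : Fin M) (hij : (i : ℕ) ≠ j + k) :
    (shiftMatrix M ^ k) i j = 0 := by
  induction k generalizing i j with
  | zero => 
    have : i ≠ j := fun h => hij (by simp [h])
    simp [this]
  | succ k ih =>
    rw [pow_succ, Matrix.mul_apply]
    refine Finset.sum_eq_zero fun l _ => ?_
    by_cases hl : (l : ℕ) = j + 1
    · rw [ih i l (by omega), zero_mul]
    · simp [shiftMatrix, hl]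

lemma shift_pow_self (M : ℕ) : shiftMatrix M ^ M = 0 := by
  ext i j
  exact shift_pow_apply M M i j (by omega)

lemma kronecker_pow' {m n : Type*} [Fintype n] [DecidableEq n] [Fintype m] [DecidableEq m]
    (S : Matrix m m ℝ) (B : Matrix n n ℝ) (k : ℕ) : (S ⊗ₖ B) ^ k = (S ^ k) ⊗ₖ (B ^ k) := by
  induction k with
  | zero => simp
  | succ k ih => rw [pow_succ, ih, pow_succ, pow_succ, Matrix.mul_kronecker_mul]

open scoped Matrix.Norms.L2Operator in
lemma norm_pow_le'' {n : Type*} [Fintype n] [DecidableEq n] (X : Matrix n n ℝ) (b : ℝ)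
    (hX : ‖X‖ ≤ b) (k : ℕ) : ‖X ^ k‖ ≤ b ^ k := by
  induction k with
  | zero => simpa using norm_one_le'
  | succ k ih =>
    rw [pow_succ, pow_succ]
    exact (norm_mul_le _ _).trans
      (mul_le_mul ih hX (norm_nonneg _) ((norm_nonneg _).trans ih))

open scoped Matrix.Norms.L2Operator in
theorem stmt6_aux {M N : ℕ} (hM : 1 ≤ M) (hN : 1 ≤ N)
    (A : Matrix (Fin N) (Fin N) ℝ) (ν : ℝ) (hν : ν = specNorm A) (hνpos : 0 < ν)
    (h : ℝ) (hh : 0 < h) (hhν : h * ν ≤ 2)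
    (T : ℝ) (hT : T = ((M : ℝ) - 1) * h) :
    specNorm ((1 : Matrix (Fin M × Fin N) (Fin M × Fin N) ℝ)
        - shiftMatrix M ⊗ₖ ((1 : Matrix (Fin N) (Fin N) ℝ) + h • A)) *
      specNorm ((1 : Matrix (Fin M × Fin N) (Fin M × Fin N) ℝ)
        - shiftMatrix M ⊗ₖ ((1 : Matrix (Fin N) (Fin N) ℝ) + h • A))⁻¹
      ≤ 12 * Real.exp (ν * T) / (h * ν) := by
  rw [specNorm_eq] at hν
  rw [specNorm_eq, specNorm_eq]
  set B := (1 : Matrix (Fin N) (Fin N) ℝ) + h • A with hB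
  set X := shiftMatrix M ⊗ₖ B with hX
  have hx : 0 < h * ν := by positivity
  have hBn : ‖B‖ ≤ 1 + h * ν := by
    refine (norm_add_le _ _).trans ?_
    rw [norm_smul, Real.norm_of_nonneg hh.le, ← hν]
    linarith [norm_one_le' (n := Fin N)]
  have hXn : ‖X‖ ≤ 1 + h * ν := by
    refine (norm_kronecker_le _ _).trans ?_
    nlinarith [norm_shift_le M, norm_nonneg B]
  have hXM : X ^ M = 0 := by
    rw [hX, kronecker_pow', shift_pow_self, Matrix.zero_kronecker]
  have hinv : (1 - X)⁻¹ = ∑ k ∈ Finset.range M, X ^ k := by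
    apply Matrix.inv_eq_right_inv
    rw [mul_neg_geom_sum, hXM, sub_zero]
  have h1 : ‖1 - X‖ ≤ 4 := by
    refine (norm_sub_le _ _).trans ?_
    linarith [norm_one_le' (n := Fin M × Fin N)]
  have h2 : ‖(1 - X)⁻¹‖ ≤ 3 * Real.exp (ν * T) / (h * ν) := by
    rw [hinv]
    refine (norm_sum_le_of_le _ fun k _ => norm_pow_le'' X _ hXn k).trans ?_
    rw [le_div_iff₀ hx]
    have hg := geom_sum_mul (1 + h * ν) M
    rw [add_sub_cancel_left] at hg
    rw [hg]
    obtain ⟨m, rfl⟩ : ∃ m, M = m + 1 := ⟨M - 1, by omega⟩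
    have he : (1 + h * ν) ^ m ≤ Real.exp (ν * T) := by
      have : ν * T = m * (h * ν) := by rw [hT]; push_cast; ring
      rw [this, Real.exp_nat_mul]
      gcongr
      linarith [Real.add_one_le_exp (h * ν)]
    have hp : 0 < (1 + h * ν) ^ m := by positivity
    rw [pow_succ]
    nlinarith
  calc _ ≤ 4 * (3 * Real.exp (ν * T) / (h * ν)) :=
        mul_le_mul h1 h2 (norm_nonneg _) (by norm_num)
    _ = _ := by ring

theorem stmt6 {M N : ℕ} (hM : 1 ≤ M) (hN : 1 ≤ N)
    (A : Matrix (Fin N) (Fin N) ℝ) (ν : ℝ) (hν : ν = specNorm A) (hνpos : 0 < ν)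
    (h : ℝ) (hh : 0 < h) (hhν : h * ν ≤ 2)
    (T : ℝ) (hT : T = ((M : ℝ) - 1) * h) :
    specNorm ((1 : Matrix (Fin M × Fin N) (Fin M × Fin N) ℝ)
        - shiftMatrix M ⊗ₖ ((1 : Matrix (Fin N) (Fin N) ℝ) + h • A)) *
      specNorm ((1 : Matrix (Fin M × Fin N) (Fin M × Fin N) ℝ)
        - shiftMatrix M ⊗ₖ ((1 : Matrix (Fin N) (Fin N) ℝ) + h • A))⁻¹
      ≤ 12 * Real.exp (ν * T) / (h * ν) := by
  exact stmt6_aux hM hN A ν hν hνpos h hh hhν T hT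
end

section
/- Let M ≥ 1, N ≥ 1, let A be a real N×N matrix with ν = ‖A‖, let h > 0 satisfy hν ≤ 1/2, and let T = (M−1)h. Let Ã_b = I_{MN} − S ⊗ I_N − h·(E ⊗ A) be the backward-Euler block matrix. If ‖(I_N − h·A)⁻¹‖ ≤ 1, then the condition number of Ã_b satisfies κ(Ã_b) = ‖Ã_b‖·‖Ã_b⁻¹‖ ≤ 2.5·(T/h + 1). -/
open Matrix
open scoped Kronecker

/-- The M×M diagonal matrix with first diagonal entry 0 and all other diagonal entries 1. -/
def ediagMatrix (M : ℕ) : Matrix (Fin M) (Fin M) ℝ :=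
  Matrix.of fun i j => if i = j ∧ (i : ℕ) ≠ 0 then 1 else 0


/-- The `k`-th block of a vector. -/
noncomputable def blk {M N : ℕ} (x : Fin M × Fin N → ℝ) (k : Fin M) : EuclideanSpace ℝ (Fin N) :=
  WithLp.toLp 2 (fun i => x (k, i))

lemma specNorm_mulVec {n : Type*} [Fintype n] [DecidableEq n] (A : Matrix n n ℝ) (x : n → ℝ) :
    ‖(WithLp.toLp 2 (A *ᵥ x) : EuclideanSpace ℝ n)‖
      ≤ specNorm A * ‖(WithLp.toLp 2 x : EuclideanSpace ℝ n)‖ :=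
  (LinearMap.toContinuousLinearMap (Matrix.toEuclideanLin A)).le_opNorm (WithLp.toLp 2 x)

lemma specNorm_le {n : Type*} [Fintype n] [DecidableEq n] (A : Matrix n n ℝ) (c : ℝ) (hc : 0 ≤ c)
    (H : ∀ x : n → ℝ, ‖(WithLp.toLp 2 (A *ᵥ x) : EuclideanSpace ℝ n)‖
      ≤ c * ‖(WithLp.toLp 2 x : EuclideanSpace ℝ n)‖) : specNorm A ≤ c :=
  ContinuousLinearMap.opNorm_le_bound _ hc (fun x => H x.ofLp)

lemma norm_sq_blk {M N : ℕ} (x : Fin M × Fin N → ℝ) :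
    ‖(WithLp.toLp 2 x : EuclideanSpace ℝ (Fin M × Fin N))‖ ^ 2 = ∑ k, ‖blk x k‖ ^ 2 := by
  simp only [EuclideanSpace.norm_sq_eq, blk, Fintype.sum_prod_type]

lemma specNorm_le_blk {M N : ℕ} (C : Matrix (Fin M × Fin N) (Fin M × Fin N) ℝ) (c : ℝ) (hc : 0 ≤ c)
    (H : ∀ x, ∑ k, ‖blk (C *ᵥ x) k‖ ^ 2 ≤ c ^ 2 * ∑ k, ‖blk x k‖ ^ 2) : specNorm C ≤ c := by
  refine specNorm_le _ _ hc fun x => ?_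
  have := H x
  rw [← norm_sq_blk, ← norm_sq_blk, ← mul_pow] at this
  exact le_of_sq_le_sq this (by positivity)

lemma shift_zero {M N : ℕ} (x : Fin M × Fin N → ℝ) (k : Fin M) (hk : (k : ℕ) = 0) :
    blk ((shiftMatrix M ⊗ₖ (1 : Matrix (Fin N) (Fin N) ℝ)) *ᵥ x) k = 0 := by
  ext i
  simp [blk, mulVec, dotProduct, shiftMatrix, kroneckerMap_apply, hk]

lemma shift_succ {M N : ℕ} (x : Fin M × Fin N → ℝ) (k j : Fin M) (hk : (k : ℕ) = j + 1) :
    blk ((shiftMatrix M ⊗ₖ (1 : Matrix (Fin N) (Fin N) ℝ)) *ᵥ x) k = blk x j := by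
  ext i
  have : ∀ l : Fin M, (j : ℕ) = l ↔ j = l := fun l => Fin.ext_iff.symm
  simp [blk, mulVec, dotProduct, shiftMatrix, kroneckerMap_apply, hk, Fintype.sum_prod_type,
    Matrix.one_apply, this, Finset.sum_ite_eq, ite_and]

lemma ediag_zero {M N : ℕ} (A : Matrix (Fin N) (Fin N) ℝ) (x : Fin M × Fin N → ℝ) (k : Fin M)
    (hk : (k : ℕ) = 0) : blk ((ediagMatrix M ⊗ₖ A) *ᵥ x) k = 0 := by
  ext i
  simp [blk, mulVec, dotProduct, ediagMatrix, kroneckerMap_apply, hk]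

lemma ediag_pos {M N : ℕ} (A : Matrix (Fin N) (Fin N) ℝ) (x : Fin M × Fin N → ℝ) (k : Fin M)
    (hk : (k : ℕ) ≠ 0) :
    blk ((ediagMatrix M ⊗ₖ A) *ᵥ x) k = WithLp.toLp 2 (A *ᵥ (fun i => x (k, i))) := by
  ext i
  simp only [blk, mulVec, dotProduct, ediagMatrix, kroneckerMap_apply, hk, Fintype.sum_prod_type,
    Matrix.of_apply]
  rw [Finset.sum_eq_single k]
  · simp [hk]
  · intro b _ hb
    simp [hb.symm]
  · simp

lemma specNorm_nonneg {n : Type*} [Fintype n] [DecidableEq n] (A : Matrix n n ℝ) :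
    0 ≤ specNorm A := norm_nonneg _

lemma norm_shift {M N : ℕ} :
    specNorm (shiftMatrix M ⊗ₖ (1 : Matrix (Fin N) (Fin N) ℝ)) ≤ 1 := by
  refine specNorm_le_blk _ _ zero_le_one fun x => ?_
  rw [one_pow, one_mul]
  cases M with
  | zero => simp
  | succ m =>
    rw [Fin.sum_univ_succ, Fin.sum_univ_castSucc (n := m), shift_zero _ _ (by simp)]
    have : ∀ i : Fin m, blk ((shiftMatrix (m+1) ⊗ₖ (1 : Matrix (Fin N) (Fin N) ℝ)) *ᵥ x) i.succ
        = blk x i.castSucc := fun i => shift_succ _ _ _ (by simp)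
    simp only [this]
    have := sq_nonneg ‖blk x (Fin.last m)‖
    simp

lemma norm_ediag {M N : ℕ} (A : Matrix (Fin N) (Fin N) ℝ) :
    specNorm (ediagMatrix M ⊗ₖ A) ≤ specNorm A := by
  refine specNorm_le_blk _ _ (specNorm_nonneg _) fun x => ?_
  rw [Finset.mul_sum]
  refine Finset.sum_le_sum fun k _ => ?_
  by_cases hk : (k : ℕ) = 0
  · rw [ediag_zero _ _ _ hk]
    simp; positivity
  · rw [ediag_pos _ _ _ hk, ← mul_pow]
    exact pow_le_pow_left₀ (norm_nonneg _) (specNorm_mulVec _ _) 2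

open scoped Matrix.Norms.L2Operator in
lemma norm_whole {M N : ℕ} (hM : 1 ≤ M) (hN : 1 ≤ N) (A : Matrix (Fin N) (Fin N) ℝ) (h : ℝ)
    (hh : 0 < h) (hA : h * specNorm A ≤ 1 / 2) :
    specNorm ((1 : Matrix (Fin M × Fin N) (Fin M × Fin N) ℝ)
        - shiftMatrix M ⊗ₖ (1 : Matrix (Fin N) (Fin N) ℝ)
        - h • (ediagMatrix M ⊗ₖ A)) ≤ 2.5 := by
  have h1 : specNorm (1 : Matrix (Fin M × Fin N) (Fin M × Fin N) ℝ) ≤ 1 :=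
    specNorm_le _ _ zero_le_one (by simp)
  have h2 := norm_shift (M := M) (N := N)
  have h3 := norm_ediag (M := M) A
  simp only [specNorm_eq] at *
  have h4 := norm_sub_le ((1 : Matrix (Fin M × Fin N) (Fin M × Fin N) ℝ)
        - shiftMatrix M ⊗ₖ (1 : Matrix (Fin N) (Fin N) ℝ)) (h • (ediagMatrix M ⊗ₖ A))
  have h5 := norm_sub_le (1 : Matrix (Fin M × Fin N) (Fin M × Fin N) ℝ)
        (shiftMatrix M ⊗ₖ (1 : Matrix (Fin N) (Fin N) ℝ))
  rw [norm_smul, Real.norm_of_nonneg hh.le] at h4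
  have h6 := mul_le_mul_of_nonneg_left h3 hh.le
  norm_num at *
  linarith

open scoped Matrix.Norms.L2Operator in
lemma isUnit_B {N : ℕ} (A : Matrix (Fin N) (Fin N) ℝ) (h : ℝ)
    (hh : 0 < h) (hA : h * specNorm A ≤ 1 / 2) :
    IsUnit ((1 : Matrix (Fin N) (Fin N) ℝ) - h • A) := by
  apply isUnit_one_sub_of_norm_lt_one
  rw [norm_smul, Real.norm_of_nonneg hh.le, ← specNorm_eq]
  linarith

lemma norm_inv_whole {M N : ℕ} (A : Matrix (Fin N) (Fin N) ℝ) (h : ℝ)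
    (hh : 0 < h) (hA : h * specNorm A ≤ 1 / 2)
    (hB : specNorm ((1 : Matrix (Fin N) (Fin N) ℝ) - h • A)⁻¹ ≤ 1) :
    specNorm ((1 : Matrix (Fin M × Fin N) (Fin M × Fin N) ℝ)
        - shiftMatrix M ⊗ₖ (1 : Matrix (Fin N) (Fin N) ℝ)
        - h • (ediagMatrix M ⊗ₖ A))⁻¹ ≤ M := by
  set C := ((1 : Matrix (Fin M × Fin N) (Fin M × Fin N) ℝ)
        - shiftMatrix M ⊗ₖ (1 : Matrix (Fin N) (Fin N) ℝ)
        - h • (ediagMatrix M ⊗ₖ A)) with hC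
  by_cases hu : IsUnit C.det
  swap
  · rw [Matrix.nonsing_inv_apply_not_isUnit _ hu]
    simp [specNorm]
  refine specNorm_le_blk _ _ (Nat.cast_nonneg _) fun b => ?_
  set x := C⁻¹ *ᵥ b with hx
  have hCx : b = C *ᵥ x := by
    rw [hx, Matrix.mulVec_mulVec, Matrix.mul_nonsing_inv _ hu, Matrix.one_mulVec]
  have hblk : ∀ k, blk b k = blk x k
      - blk ((shiftMatrix M ⊗ₖ (1 : Matrix (Fin N) (Fin N) ℝ)) *ᵥ x) k
      - h • blk ((ediagMatrix M ⊗ₖ A) *ᵥ x) k := by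
    intro k
    rw [hCx, hC]
    ext i
    simp [blk, Matrix.sub_mulVec, Matrix.smul_mulVec]
  have hBu := (Matrix.isUnit_iff_isUnit_det _).1 (isUnit_B A h hh hA)
  have key : ∀ y : Fin N → ℝ, ‖(WithLp.toLp 2 y : EuclideanSpace ℝ (Fin N))‖ ≤
      ‖(WithLp.toLp 2 y - h • WithLp.toLp 2 (A *ᵥ y) : EuclideanSpace ℝ (Fin N))‖ := by
    intro y
    have h1 := specNorm_mulVec ((1 : Matrix (Fin N) (Fin N) ℝ) - h • A)⁻¹
      (((1 : Matrix (Fin N) (Fin N) ℝ) - h • A) *ᵥ y)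
    rw [Matrix.mulVec_mulVec, Matrix.nonsing_inv_mul _ hBu, Matrix.one_mulVec,
      Matrix.sub_mulVec, Matrix.one_mulVec, Matrix.smul_mulVec] at h1
    exact h1.trans (mul_le_of_le_one_left (norm_nonneg _) hB)
  set β : ℕ → ℝ := fun j => if hj : j < M then ‖blk b ⟨j, hj⟩‖ else 0 with hβ
  have hβ0 : ∀ j, 0 ≤ β j := by
    intro j
    simp only [hβ]
    split_ifs <;> positivity
  have hind : ∀ (k : ℕ) (hk : k < M), ‖blk x ⟨k, hk⟩‖ ≤ ∑ j ∈ Finset.range (k + 1), β j := by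
    intro k
    induction k with
    | zero =>
      intro hk
      have := hblk ⟨0, hk⟩
      rw [shift_zero _ _ rfl, ediag_zero _ _ _ rfl] at this
      simp [hβ, hk, this]
    | succ k ih =>
      intro hk
      have hk' : k < M := by omega
      have h1 := hblk ⟨k + 1, hk⟩
      rw [shift_succ _ _ ⟨k, hk'⟩ rfl, ediag_pos _ _ _ (by simp)] at h1
      have h2 := key (fun i => x (⟨k + 1, hk⟩, i))
      have h3 : blk x ⟨k + 1, hk⟩ - h • (WithLp.toLp 2 (A *ᵥ (fun i => x (⟨k + 1, hk⟩, i))) :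
          EuclideanSpace ℝ (Fin N)) = blk x ⟨k, hk'⟩ + blk b ⟨k + 1, hk⟩ := by
        rw [h1]; abel
      have h4 : ‖blk x ⟨k + 1, hk⟩‖ ≤ ‖blk x ⟨k, hk'⟩ + blk b ⟨k + 1, hk⟩‖ := by
        rw [← h3]; exact h2
      rw [Finset.sum_range_succ]
      have h5 : β (k + 1) = ‖blk b ⟨k + 1, hk⟩‖ := by simp [hβ, hk]
      rw [h5]
      exact h4.trans ((norm_add_le _ _).trans (add_le_add_left (ih hk') _))
  have hall : ∀ k : Fin M, ‖blk x k‖ ≤ ∑ j, ‖blk b j‖ := by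
    intro k
    refine (hind k k.2).trans ?_
    have h1 : ∑ j ∈ Finset.range M, β j = ∑ j : Fin M, ‖blk b j‖ := by
      rw [Finset.sum_range]
      simp [hβ]
    rw [← h1]
    exact Finset.sum_le_sum_of_subset_of_nonneg
      (Finset.range_subset_range.2 k.2) (fun j _ _ => hβ0 j)
  have hcs : (∑ j, ‖blk b j‖) ^ 2 ≤ (M : ℝ) * ∑ j, ‖blk b j‖ ^ 2 := by
    have := sq_sum_le_card_mul_sum_sq (s := (Finset.univ : Finset (Fin M))) (f := fun j => ‖blk b j‖)
    simpa using this
  calc ∑ k, ‖blk x k‖ ^ 2 ≤ ∑ k : Fin M, (M : ℝ) * ∑ j, ‖blk b j‖ ^ 2 :=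
        Finset.sum_le_sum fun k _ =>
          (pow_le_pow_left₀ (norm_nonneg _) (hall k) 2).trans hcs
    _ = (M : ℝ) ^ 2 * ∑ j, ‖blk b j‖ ^ 2 := by
        simp; ring

theorem stmt16 {M N : ℕ} (hM : 1 ≤ M) (hN : 1 ≤ N)
    (A : Matrix (Fin N) (Fin N) ℝ) (ν : ℝ) (hν : ν = specNorm A)
    (h : ℝ) (hh : 0 < h) (hhν : h * ν ≤ 1 / 2)
    (T : ℝ) (hT : T = ((M : ℝ) - 1) * h)
    (hBinv : specNorm ((1 : Matrix (Fin N) (Fin N) ℝ) - h • A)⁻¹ ≤ 1) :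
    specNorm ((1 : Matrix (Fin M × Fin N) (Fin M × Fin N) ℝ)
        - shiftMatrix M ⊗ₖ (1 : Matrix (Fin N) (Fin N) ℝ)
        - h • (ediagMatrix M ⊗ₖ A)) *
      specNorm ((1 : Matrix (Fin M × Fin N) (Fin M × Fin N) ℝ)
        - shiftMatrix M ⊗ₖ (1 : Matrix (Fin N) (Fin N) ℝ)
        - h • (ediagMatrix M ⊗ₖ A))⁻¹
      ≤ 2.5 * (T / h + 1) := by
  subst hν hT
  have h1 : ((M : ℝ) - 1) * h / h + 1 = M := by
    field_simp
    ring
  rw [h1]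
  exact mul_le_mul (norm_whole hM hN A h hh hhν) (norm_inv_whole A h hh hhν hBinv)
    (specNorm_nonneg _) (by norm_num)
end
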